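/- arXiv:2311.06085 — 4 statements merged into one kernel-verified Lean document; each statement's English description precedes it below -/
import Mathlib

section
/- Let G = (V,E) be a finite simple graph, let ℓ ∈ V, let Γ be a group of automorphisms of G, and let O_ℓ = {γ(ℓ) : γ ∈ Γ} be the orbit of ℓ. Set O'_ℓ = O_ℓ \ {ℓ} and S = {(ℓ,f) : f ∈ O'_ℓ}. Assume C ⊆ O'_ℓ is a maximal clique of the induced subgraph G[O'_ℓ] and that no node of O'_ℓ is adjacent to ℓ. Then the SST clique cut Σ_{i∈C} x_i ≤ x_ℓ defines a facet of P(G,S); concretely, for every a ∈ ℝ^V and b ∈ ℝ such that ⟨a, χ_I⟩ ≤ b holds for every stable set I of G with (χ_I)_f ≤ (χ_I)_ℓ for all f ∈ O'_ℓ, and such that ⟨a, χ_I⟩ = b holds for every such I with Σ_{i∈C}(χ_I)_i = (χ_I)_ℓ, one has b = 0 and there exists λ ∈ ℝ with a_v = λ for all v ∈ C, a_ℓ = −λ, and a_v = 0 for all v ∈ V \ (C ∪ {ℓ}). -/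
open Finset

/-- `I` is a stable set of `G`. -/
def IsStableSet {V : Type*} (G : SimpleGraph V) (I : Finset V) : Prop :=
  ∀ u ∈ I, ∀ v ∈ I, ¬ G.Adj u v

/-- The indicator vector of a finite node set. -/
def indic {V : Type*} [DecidableEq V] (I : Finset V) : V → ℝ :=
  fun v => if v ∈ I then 1 else 0

/-!
The empty set lies on the face, so `b = 0`. For `u ∈ C` the pair `{l, u}` lies on the face, which
forces `a u = -a l`. If `v` is outside `C ∪ {l}`, some set on the face stays on it when `v` is
added, which forces `a v = 0`: for `v ∉ O'` this set is `∅`, and for `v ∈ O'` it is `{l, u}`, where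
`u ∈ C` is a non-neighbour of `v`, provided by the maximality of `C`.
-/

section StableSet

variable {V : Type*} {G : SimpleGraph V}

lemma isStableSet_empty : IsStableSet G ∅ := by
  simp [IsStableSet]

lemma isStableSet_insert [DecidableEq V] {v : V} {I : Finset V} :
    IsStableSet G (insert v I) ↔ IsStableSet G I ∧ ∀ u ∈ I, ¬ G.Adj v u := by
  simp only [IsStableSet, forall_mem_insert, G.irrefl, not_false_eq_true, true_and, G.adj_comm _ v]
  exact ⟨fun h => ⟨fun u hu => (h.2 u hu).2, h.1⟩, fun h => ⟨h.2, fun u hu => ⟨h.2 u hu, h.1 u hu⟩⟩⟩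

lemma isStableSet_singleton (v : V) : IsStableSet G {v} := by
  simp [IsStableSet]

lemma isStableSet_pair [DecidableEq V] {u v : V} (huv : ¬ G.Adj u v) : IsStableSet G {u, v} :=
  isStableSet_insert.2 ⟨isStableSet_singleton v, by simpa using huv⟩

end StableSet

lemma exists_not_adj_of_maximal_isClique {V : Type*} {G : SimpleGraph V}
    {F : Set V} {C : Finset V}
    (hC : Maximal (fun K : Finset V => (K : Set V) ⊆ F ∧ G.IsClique (K : Set V)) C)
    {v : V} (hvF : v ∈ F) (hvC : v ∉ C) : ∃ u ∈ C, ¬ G.Adj v u := by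
  classical
  by_contra! hadj
  have hinsert : (↑(insert v C) : Set V) ⊆ F ∧ G.IsClique (↑(insert v C) : Set V) := by
    rw [coe_insert]
    exact ⟨Set.insert_subset hvF hC.prop.1, hC.prop.2.insert fun u hu _ => hadj u hu⟩
  exact hC.not_prop_of_gt (ssubset_insert hvC) hinsert

section Indicator

variable {V : Type*} [DecidableEq V]

lemma indic_le_indic_iff {I : Finset V} {u v : V} : indic I u ≤ indic I v ↔ (u ∈ I → v ∈ I) := by
  by_cases hu : u ∈ I <;> by_cases hv : v ∈ I <;> simp [indic, hu, hv]

lemma sum_indic (C I : Finset V) : ∑ i ∈ C, indic I i = #(C ∩ I) := by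
  simp [indic]

end Indicator

/-- The set `I` is a vertex of the face that the clique cut `∑ i ∈ C, x i ≤ x l` exposes in the
stable set polytope with symmetry handling inequalities `x f ≤ x l` for all followers `f ∈ F` of
the leader `l`. The set `F` plays the role of `O'`, but need not come from an orbit. -/
structure IsOnCliqueCutFace {V : Type*} [DecidableEq V] (G : SimpleGraph V) (l : V) (F : Set V)
    (C I : Finset V) : Prop where
  isStableSet : IsStableSet G I
  indic_le : ∀ f ∈ F, indic I f ≤ indic I l
  sum_indic_eq : ∑ i ∈ C, indic I i = indic I l

namespace IsOnCliqueCutFace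

variable {V : Type*} [DecidableEq V] {G : SimpleGraph V} {l : V} {F : Set V} {C I : Finset V}

lemma of_leader_notMem (hI : IsStableSet G I) (hl : l ∉ I) (hF : ∀ f ∈ F, f ∉ I)
    (hCF : (C : Set V) ⊆ F) : IsOnCliqueCutFace G l F C I where
  isStableSet := hI
  indic_le f hf := indic_le_indic_iff.2 fun hfI => absurd hfI (hF f hf)
  sum_indic_eq := by
    have hCI : C ∩ I = ∅ := disjoint_iff_inter_eq_empty.1 <|
      disjoint_left.2 fun i hi => hF i (hCF hi)
    rw [sum_indic, hCI]
    simp [indic, hl]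

lemma of_leader_mem (hI : IsStableSet G I) (hl : l ∈ I) {u : V} (hCI : C ∩ I = {u}) :
    IsOnCliqueCutFace G l F C I where
  isStableSet := hI
  indic_le _ _ := indic_le_indic_iff.2 fun _ => hl
  sum_indic_eq := by
    rw [sum_indic, hCI]
    simp [indic, hl]

lemma empty (hCF : (C : Set V) ⊆ F) : IsOnCliqueCutFace G l F C ∅ :=
  of_leader_notMem isStableSet_empty (notMem_empty l) (fun f _ => notMem_empty f) hCF

lemma singleton (hCF : (C : Set V) ⊆ F) {v : V} (hvl : v ≠ l) (hvF : v ∉ F) :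
    IsOnCliqueCutFace G l F C {v} :=
  of_leader_notMem (isStableSet_singleton v) (by simpa using hvl.symm)
    (fun _ hf => by simpa using ne_of_mem_of_not_mem hf hvF) hCF

lemma leader_pair (hlC : l ∉ C) {u : V} (hu : u ∈ C) (hlu : ¬ G.Adj l u) :
    IsOnCliqueCutFace G l F C {l, u} :=
  of_leader_mem (isStableSet_pair hlu) (mem_insert_self l {u}) (u := u) <| by
    rw [inter_insert_of_notMem hlC, inter_singleton_of_mem hu]

lemma insert_leader_pair (hlC : l ∉ C) {u v : V} (hu : u ∈ C) (hv : v ∉ C)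
    (hlu : ¬ G.Adj l u) (hvl : ¬ G.Adj v l) (hvu : ¬ G.Adj v u) :
    IsOnCliqueCutFace G l F C (insert v {l, u}) :=
  of_leader_mem (isStableSet_insert.2 ⟨isStableSet_pair hlu, by simp [hvl, hvu]⟩)
    (by simp) (u := u) <| by
      rw [inter_insert_of_notMem hv, inter_insert_of_notMem hlC, inter_singleton_of_mem hu]

end IsOnCliqueCutFace

theorem sstCliqueCut_facet_general {V M : Type*} [DecidableEq V] [AddCommGroup M]
    {G : SimpleGraph V} {l : V} {F : Set V} (hlF : l ∉ F) {C : Finset V}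
    (hC : Maximal (fun K : Finset V => (K : Set V) ⊆ F ∧ G.IsClique (K : Set V)) C)
    (hnoadj : ∀ f ∈ F, ¬ G.Adj l f) {a : V → M} {b : M}
    (htight : ∀ I : Finset V, IsOnCliqueCutFace G l F C I → ∑ v ∈ I, a v = b) :
    b = 0 ∧ ∃ lam : M, (∀ v ∈ C, a v = lam) ∧ a l = -lam ∧ ∀ v : V, v ∉ C → v ≠ l → a v = 0 := by
  have hCF : (C : Set V) ⊆ F := hC.prop.1
  have hlC : l ∉ C := fun hl => hlF (hCF hl)
  have hb : b = 0 := by simpa using (htight ∅ (.empty hCF)).symm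
  have hpair {u : V} (hu : u ∈ C) : IsOnCliqueCutFace G l F C {l, u} :=
    .leader_pair hlC hu (hnoadj u (hCF hu))
  refine ⟨hb, -a l, fun u hu => ?_, (neg_neg _).symm, fun v hvC hvl => ?_⟩
  · have hsum := htight {l, u} (hpair hu)
    rw [sum_pair (ne_of_mem_of_not_mem hu hlC).symm, hb] at hsum
    exact eq_neg_of_add_eq_zero_right hsum
  by_cases hvF : v ∈ F
  · obtain ⟨u, hu, hvu⟩ := exists_not_adj_of_maximal_isClique hC hvF hvC
    have htriple : IsOnCliqueCutFace G l F C (insert v {l, u}) :=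
      .insert_leader_pair hlC hu hvC (hnoadj u (hCF hu)) (fun h => hnoadj v hvF h.symm) hvu
    have hv : v ∉ ({l, u} : Finset V) := by simp [hvl, (ne_of_mem_of_not_mem hu hvC).symm]
    have hsum := (htight _ htriple).trans (htight _ (hpair hu)).symm
    rwa [sum_insert hv, add_eq_right] at hsum
  · have hsum := htight {v} (.singleton hCF hvl hvF)
    rwa [sum_singleton, hb] at hsum

/-- The SST clique cut `∑_{i ∈ C} x_i ≤ x_ℓ` defines a facet of `P(G,S)` when `C` is a
maximal clique of the subgraph induced on `O'_ℓ = O_ℓ \ {ℓ}` and no node of `O'_ℓ` is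
adjacent to `ℓ`: any valid inequality `⟨a,x⟩ ≤ b` that is tight on the face cut out by
the clique cut is a multiple of the clique cut. -/
theorem sstCliqueCut_facet
    {V : Type*} [Fintype V] [DecidableEq V] (G : SimpleGraph V)
    (Γ : Subgroup (Equiv.Perm V))
    (hΓ : ∀ γ ∈ Γ, ∀ u v, G.Adj (γ u) (γ v) ↔ G.Adj u v)
    (l : V)
    (O' : Set V) (hO' : O' = {w | ∃ γ ∈ Γ, γ l = w} \ {l})
    (C : Finset V) (hCsub : (↑C : Set V) ⊆ O') (hCclique : G.IsClique (↑C : Set V))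
    (hCmax : ∀ C' : Finset V, (↑C' : Set V) ⊆ O' → G.IsClique (↑C' : Set V) →
      C ⊆ C' → C' = C)
    (hnoadj : ∀ f ∈ O', ¬ G.Adj l f)
    (a : V → ℝ) (b : ℝ)
    (hvalid : ∀ I : Finset V, IsStableSet G I →
      (∀ f ∈ O', indic I f ≤ indic I l) → ∑ v ∈ I, a v ≤ b)
    (htight : ∀ I : Finset V, IsStableSet G I →
      (∀ f ∈ O', indic I f ≤ indic I l) →
      (∑ i ∈ C, indic I i = indic I l) → ∑ v ∈ I, a v = b) :
    b = 0 ∧ ∃ lam : ℝ, (∀ v ∈ C, a v = lam) ∧ a l = -lam ∧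
      ∀ v : V, v ∉ C → v ≠ l → a v = 0 := by
  have hlO' : l ∉ O' := by simp [hO']
  have hC : Maximal (fun K : Finset V => (K : Set V) ⊆ O' ∧ G.IsClique (K : Set V)) C :=
    ⟨⟨hCsub, hCclique⟩, fun K hK hCK => (hCmax K hK.1 hK.2 hCK).le⟩
  exact sstCliqueCut_facet_general hlO' hC hnoadj fun I hI =>
    htight I hI.isStableSet hI.indic_le hI.sum_indic_eq
end

section
/- Let G = (V,E) be a connected bipartite finite simple graph with bipartition V = R ∪ B, let Γ be a group of automorphisms of G, and let L = (ℓ_1,…,ℓ_k) be a sequence of distinct leaders with stabilizer-chain orbits O_i. Then there is at most one index i ∈ {1,…,k} such that O_i ∩ R ≠ ∅ and O_i ∩ B ≠ ∅. -/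
open Finset

/-- The stabilizer chain: `sstChain Γ ℓ 0 = Γ` and
`sstChain Γ ℓ (i+1)` is the pointwise stabilizer of `ℓ i` inside `sstChain Γ ℓ i`. -/
def sstChain {α : Type*} (Γ : Set (Equiv.Perm α)) (ℓ : ℕ → α) : ℕ → Set (Equiv.Perm α)
  | 0 => Γ
  | i + 1 => {γ ∈ sstChain Γ ℓ i | γ (ℓ i) = ℓ i}

/-- The orbit `O_i` of the leader `ℓ i` under the `i`-th group of the stabilizer chain. -/
def sstOrbit {α : Type*} (Γ : Set (Equiv.Perm α)) (ℓ : ℕ → α) (i : ℕ) : Set α :=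
  (fun γ : Equiv.Perm α => γ (ℓ i)) '' sstChain Γ ℓ i

/-! An automorphism that fixes a vertex of a connected bipartite graph preserves the color classes:
composing the 2-coloring with it gives a 2-coloring that agrees with the original one at the fixed
vertex, and such colorings agree everywhere. Every group of the stabilizer chain after the first
fixes the first leader, so only the first orbit can meet both color classes. -/

section Bipartite

variable {V W : Type*} {G : SimpleGraph V} {H : SimpleGraph W} {s t : Set V}

theorem boolColoring_eq_of_apply_eq (hG : G.Preconnected) {c d : G.Coloring Bool} {w : V}
    (hw : c w = d w) : c = d := by
  ext v
  obtain ⟨p⟩ := hG w v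
  have same_parity : (c w ↔ c v) ↔ (d w ↔ d v) :=
    (c.even_length_iff_congr p).symm.trans (d.even_length_iff_congr p)
  rw [hw] at same_parity
  grind

open Classical in
/-- The 2-coloring of a bipartite graph given by its bipartition: the color `true` marks the part
`s`, and `false` everything else, including the isolated vertices outside both parts. -/
noncomputable def boolColoringOfIsBipartiteWith (hst : G.IsBipartiteWith s t) : G.Coloring Bool :=
  SimpleGraph.Coloring.mk (fun v ↦ decide (v ∈ s)) fun {u v} huv ↦ by
    rcases hst.mem_of_adj huv with ⟨hu, hv⟩ | ⟨hu, hv⟩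
    · simp [hu, Set.disjoint_right.mp hst.disjoint hv]
    · simp [hv, Set.disjoint_right.mp hst.disjoint hu]

theorem boolColoringOfIsBipartiteWith_eq_iff (hst : G.IsBipartiteWith s t) {u v : V} :
    boolColoringOfIsBipartiteWith hst u = boolColoringOfIsBipartiteWith hst v ↔
      (u ∈ s ↔ v ∈ s) :=
  decide_eq_decide

theorem hom_mem_left_iff_hom_mem_left (hH : H.Preconnected) (hst : G.IsBipartiteWith s t)
    (f g : H →g G) {w : W} (hw : f w ∈ s ↔ g w ∈ s) (v : W) : f v ∈ s ↔ g v ∈ s := by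
  let c := boolColoringOfIsBipartiteWith hst
  have comp_eq : (c.comp f : H.Coloring Bool) = c.comp g :=
    boolColoring_eq_of_apply_eq hH ((boolColoringOfIsBipartiteWith_eq_iff hst).mpr hw)
  exact (boolColoringOfIsBipartiteWith_eq_iff hst).mp (DFunLike.congr_fun comp_eq v)

end Bipartite

section StabilizerChain

variable {V : Type*} {Γ : Set (Equiv.Perm V)} {ℓ : ℕ → V}

theorem mem_sstChain_iff {γ : Equiv.Perm V} {n : ℕ} :
    γ ∈ sstChain Γ ℓ n ↔ γ ∈ Γ ∧ ∀ i < n, γ (ℓ i) = ℓ i := by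
  induction n with
  | zero => simp [sstChain]
  | succ n ih =>
    rw [sstChain, Set.mem_ofPred_eq, ih, and_assoc, Nat.forall_lt_succ_right]

theorem mem_left_iff_of_mem_sstOrbit_succ {G : SimpleGraph V} (hG : G.Preconnected) {R B : Set V}
    (hRB : G.IsBipartiteWith R B) (hΓ : ∀ γ ∈ Γ, ∀ u v, G.Adj u v → G.Adj (γ u) (γ v))
    {n : ℕ} {x : V} (hx : x ∈ sstOrbit Γ ℓ (n + 1)) : x ∈ R ↔ ℓ (n + 1) ∈ R := by
  obtain ⟨γ, hγ, rfl⟩ := hx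
  obtain ⟨γ_mem, γ_fixes⟩ := mem_sstChain_iff.mp hγ
  let f : G →g G := ⟨γ, fun {u v} ↦ hΓ γ γ_mem u v⟩
  have same_side_leader_zero : f (ℓ 0) ∈ R ↔ ℓ 0 ∈ R := by
    rw [show f (ℓ 0) = ℓ 0 from γ_fixes 0 n.succ_pos]
  exact hom_mem_left_iff_hom_mem_left hG hRB f .id same_side_leader_zero (ℓ (n + 1))

theorem atMostOne_twoSided_orbit_general {G : SimpleGraph V} (hG : G.Preconnected) {R B : Set V}
    (hRB : G.IsBipartiteWith R B) (hΓ : ∀ γ ∈ Γ, ∀ u v, G.Adj u v → G.Adj (γ u) (γ v)) {i : ℕ}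
    (hR : (sstOrbit Γ ℓ i ∩ R).Nonempty) (hB : (sstOrbit Γ ℓ i ∩ B).Nonempty) : i = 0 := by
  obtain ⟨x, hx, hxR⟩ := hR
  obtain ⟨y, hy, hyB⟩ := hB
  cases i with
  | zero => rfl
  | succ n =>
    have hyR : y ∈ R := (mem_left_iff_of_mem_sstOrbit_succ hG hRB hΓ hy).mpr
      ((mem_left_iff_of_mem_sstOrbit_succ hG hRB hΓ hx).mp hxR)
    exact (Set.disjoint_left.mp hRB.disjoint hyR hyB).elim

end StabilizerChain

/-- In a connected bipartite graph, at most one orbit of the stabilizer chain meets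
both color classes. -/
theorem atMostOne_twoSided_orbit
    {V : Type*} [Fintype V] [DecidableEq V] (G : SimpleGraph V)
    (hconn : G.Connected) (R B : Set V)
    (hcover : ∀ v, v ∈ R ∨ v ∈ B) (hdisjRB : Disjoint R B)
    (hbip : ∀ u v, G.Adj u v → (u ∈ R ∧ v ∈ B) ∨ (u ∈ B ∧ v ∈ R))
    (Γ : Subgroup (Equiv.Perm V))
    (hΓ : ∀ γ ∈ Γ, ∀ u v, G.Adj (γ u) (γ v) ↔ G.Adj u v)
    (k : ℕ) (ℓ : ℕ → V) (hdist : ∀ i < k, ∀ j < k, ℓ i = ℓ j → i = j) :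
    ∀ i < k, ∀ j < k,
      (sstOrbit (↑Γ : Set (Equiv.Perm V)) ℓ i ∩ R).Nonempty →
      (sstOrbit (↑Γ : Set (Equiv.Perm V)) ℓ i ∩ B).Nonempty →
      (sstOrbit (↑Γ : Set (Equiv.Perm V)) ℓ j ∩ R).Nonempty →
      (sstOrbit (↑Γ : Set (Equiv.Perm V)) ℓ j ∩ B).Nonempty →
      i = j := by
  intro i _ j _ hiR hiB hjR hjB
  have eq_zero {n : ℕ} := atMostOne_twoSided_orbit_general (ℓ := ℓ) (i := n) hconn.preconnected
    ⟨hdisjRB, hbip⟩ fun γ hγ u v ↦ (hΓ γ hγ u v).mpr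
  exact (eq_zero hiR hiB).trans (eq_zero hjR hjB).symm
end

section
/- Let G = (V,E) be a finite simple graph, Γ a group of automorphisms of G, L = (ℓ_1,…,ℓ_k) a sequence of distinct leaders with stabilizer-chain orbits O_i, and S = S(L) the SST cuts. For every leader ℓ = ℓ_i, every follower f ∈ O_i \ {ℓ}, and every induced path P in G from ℓ to f with an even number |V(P)| of nodes, the SST path cut −x_ℓ + Σ_{v∈V(P)} x_v ≤ |V(P)|/2 − 1 is valid for P(G,S), i.e., it is satisfied by every x ∈ P(G,S). -/
open Finset

/-- The SST cuts `S(L)`: pairs `(ℓ i, f)` with `f ∈ O_i \ {ℓ i}`, for `i < k`. -/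
def sstCuts {α : Type*} (Γ : Set (Equiv.Perm α)) (ℓ : ℕ → α) (k : ℕ) : Set (α × α) :=
  {p | ∃ i < k, p.1 = ℓ i ∧ p.2 ∈ sstOrbit Γ ℓ i ∧ p.2 ≠ ℓ i}

/-- `P(G,S)`: the convex hull of the indicator vectors of stable sets satisfying
all the SST cuts in `S`. -/
def sstPolytope {V : Type*} [DecidableEq V] (G : SimpleGraph V) (S : Set (V × V)) :
    Set (V → ℝ) :=
  convexHull ℝ
    {x | ∃ I : Finset V, IsStableSet G I ∧ x = indic I ∧ ∀ p ∈ S, x p.2 ≤ x p.1}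

/-!
By linearity it suffices to check the cut at the indicator vector of a stable set `I` obeying the
SST cuts. Write the even path as `u_0, …, u_{2m+1}`, and recall that `I` contains at most one end
of each edge. If `u_0 ∈ I`, the `m + 1` edges `u_0 u_1, u_2 u_3, …` cover the path, so `I` contains
at most `m` nodes of it besides `u_0`. If `u_0 ∉ I`, the SST cut also excludes `u_{2m+1}`, and the
`m` edges `u_1 u_2, u_3 u_4, …` cover the remaining nodes.
-/

section ConsecutiveSums

variable {M : Type*} [AddCommMonoid M] [Preorder M] [IsOrderedAddMonoid M]
  {y : ℕ → M} {c : M} {m : ℕ}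

theorem sum_range_two_mul_le_nsmul (hpair : ∀ j < m, y (2 * j) + y (2 * j + 1) ≤ c) :
    ∑ s ∈ range (2 * m), y s ≤ m • c := by
  induction m with
  | zero => simp
  | succ m ih =>
    have hinit : ∑ s ∈ range (2 * m), y s ≤ m • c := ih fun j hj => hpair j (by lia)
    calc ∑ s ∈ range (2 * (m + 1)), y s
        = ∑ s ∈ range (2 * m), y s + (y (2 * m) + y (2 * m + 1)) := by
          rw [mul_add_one, sum_range_succ, sum_range_succ, add_assoc]
      _ ≤ m • c + c := add_le_add hinit (hpair m m.lt_succ_self)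
      _ = (m + 1) • c := (succ_nsmul c m).symm

theorem sum_range_two_mul_add_two_le_of_le_first
    (hpair : ∀ j < m + 1, y (2 * j) + y (2 * j + 1) ≤ c) (hfirst : c ≤ y 0) :
    ∑ s ∈ range (2 * m + 2), y s ≤ y 0 + m • c :=
  calc ∑ s ∈ range (2 * (m + 1)), y s
      ≤ (m + 1) • c := sum_range_two_mul_le_nsmul hpair
    _ = c + m • c := succ_nsmul' c m
    _ ≤ y 0 + m • c := by gcongr

theorem sum_range_two_mul_add_two_le_of_last_nonpos
    (hpair : ∀ j < m, y (2 * j + 1) + y (2 * j + 2) ≤ c) (hlast : y (2 * m + 1) ≤ 0) :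
    ∑ s ∈ range (2 * m + 2), y s ≤ y 0 + m • c := by
  have hinner : ∑ s ∈ range (2 * m), y (s + 1) ≤ m • c :=
    sum_range_two_mul_le_nsmul hpair
  calc ∑ s ∈ range (2 * m + 2), y s
      = ∑ s ∈ range (2 * m), y (s + 1) + y 0 + y (2 * m + 1) := by
        rw [sum_range_succ, sum_range_succ']
    _ ≤ m • c + y 0 + 0 := by gcongr
    _ = y 0 + m • c := by rw [add_zero, add_comm]

end ConsecutiveSums

section StableSets

variable {V : Type*} [DecidableEq V] {G : SimpleGraph V}

theorem indic_eq_zero_or_one (I : Finset V) (v : V) : indic I v = 0 ∨ indic I v = 1 :=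
  (ite_eq_or_eq (v ∈ I) 1 0).symm

theorem IsStableSet.indic_add_indic_le_one {I : Finset V} (hI : IsStableSet G I) {a b : V}
    (hab : G.Adj a b) : indic I a + indic I b ≤ 1 := by
  have hnot : ¬(a ∈ I ∧ b ∈ I) := fun ⟨ha, hb⟩ => hI a ha b hb hab
  by_cases ha : a ∈ I <;> by_cases hb : b ∈ I <;> simp_all [indic]

theorem IsStableSet.sum_indic_walk_le {I : Finset V} (hI : IsStableSet G I) {m : ℕ} {u : ℕ → V}
    (hadj : ∀ s, s + 1 < 2 * m + 2 → G.Adj (u s) (u (s + 1)))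
    (hends : indic I (u (2 * m + 1)) ≤ indic I (u 0)) :
    ∑ s ∈ range (2 * m + 2), indic I (u s) ≤ indic I (u 0) + m := by
  have hpair : ∀ s, s + 1 < 2 * m + 2 → indic I (u s) + indic I (u (s + 1)) ≤ 1 :=
    fun s hs => hI.indic_add_indic_le_one (hadj s hs)
  rw [← nsmul_one m]
  rcases indic_eq_zero_or_one I (u 0) with hout | hin
  · exact sum_range_two_mul_add_two_le_of_last_nonpos
      (fun j hj => hpair (2 * j + 1) (by lia)) (hends.trans_eq hout)
  · exact sum_range_two_mul_add_two_le_of_le_first (fun j hj => hpair (2 * j) (by lia)) hin.ge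

theorem linearMap_le_of_mem_sstPolytope {S : Set (V × V)} {φ : (V → ℝ) →ₗ[ℝ] ℝ} {c : ℝ}
    (hφ : ∀ I, IsStableSet G I → (∀ p ∈ S, indic I p.2 ≤ indic I p.1) → φ (indic I) ≤ c)
    {x : V → ℝ} (hx : x ∈ sstPolytope G S) : φ x ≤ c := by
  refine convexHull_min ?_ (convex_halfSpace_le φ.isLinear c) hx
  rintro _ ⟨I, hI, rfl, hcuts⟩
  exact hφ I hI hcuts

theorem sstPathCut_valid_general {S : Set (V × V)} {p : ℕ} {u : ℕ → V}
    (hadj : ∀ s, s + 1 < p → G.Adj (u s) (u (s + 1))) (heven : Even p) (hp : p ≠ 0)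
    (hends : (u 0, u (p - 1)) ∈ S) {x : V → ℝ} (hx : x ∈ sstPolytope G S) :
    -x (u 0) + ∑ s ∈ range p, x (u s) ≤ (p : ℝ) / 2 - 1 := by
  obtain ⟨m, rfl⟩ : ∃ m, p = 2 * m + 2 := by
    obtain ⟨n, rfl⟩ := heven
    exact ⟨n - 1, by lia⟩
  let cut : (V → ℝ) →ₗ[ℝ] ℝ :=
    -LinearMap.proj (u 0) + ∑ s ∈ range (2 * m + 2), LinearMap.proj (u s)
  have cut_apply (z : V → ℝ) : cut z = -z (u 0) + ∑ s ∈ range (2 * m + 2), z (u s) := by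
    simp [cut]
  have hcut : cut x ≤ m := by
    refine linearMap_le_of_mem_sstPolytope (fun I hI hcuts => ?_) hx
    rw [cut_apply, neg_add_le_iff_le_add]
    exact hI.sum_indic_walk_le hadj (hcuts _ hends)
  calc -x (u 0) + ∑ s ∈ range (2 * m + 2), x (u s) = cut x := (cut_apply x).symm
    _ ≤ m := hcut
    _ = ((2 * m + 2 : ℕ) : ℝ) / 2 - 1 := by push_cast; ring

end StableSets

/-- SST path cuts are valid for `P(G,S)`: for a leader `ℓ i`, a follower `f` in its
orbit, and an even induced path `u_0, …, u_{p-1}` from `ℓ i` to `f`, every point of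
`P(G,S)` satisfies `-x_{ℓ i} + ∑_{v ∈ P} x_v ≤ p/2 - 1`. -/
theorem sstPathCut_valid
    {V : Type*} [Fintype V] [DecidableEq V] (G : SimpleGraph V)
    (Γ : Subgroup (Equiv.Perm V))
    (hΓ : ∀ γ ∈ Γ, ∀ u v, G.Adj (γ u) (γ v) ↔ G.Adj u v)
    (k : ℕ) (ℓ : ℕ → V) (hdist : ∀ i < k, ∀ j < k, ℓ i = ℓ j → i = j)
    (i : ℕ) (hi : i < k)
    (f : V) (hf : f ∈ sstOrbit (↑Γ : Set (Equiv.Perm V)) ℓ i) (hfl : f ≠ ℓ i)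
    (p : ℕ) (u : ℕ → V)
    (hinj : ∀ s < p, ∀ t < p, u s = u t → s = t)
    (hadj : ∀ s, s + 1 < p → G.Adj (u s) (u (s + 1)))
    (hind : ∀ s t, s < p → t < p → s + 2 ≤ t → ¬ G.Adj (u s) (u t))
    (hstart : u 0 = ℓ i) (hend : u (p - 1) = f) (heven : Even p) :
    ∀ x ∈ sstPolytope G (sstCuts (↑Γ : Set (Equiv.Perm V)) ℓ k),
      -x (ℓ i) + ∑ s ∈ Finset.range p, x (u s) ≤ (p : ℝ) / 2 - 1 := by
  have hp : p ≠ 0 := by rintro rfl; exact hfl (hend.symm.trans hstart)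
  have hcut : (u 0, u (p - 1)) ∈ sstCuts (Γ : Set (Equiv.Perm V)) ℓ k :=
    ⟨i, hi, hstart, hend ▸ hf, hend ▸ hfl⟩
  exact fun x hx => hstart ▸ sstPathCut_valid_general hadj heven hp hcut hx
end

section
/- Let G = (V,E) be a trivially perfect finite simple graph with node weights c ∈ ℤ^V, and let Γ_G be the group of all automorphisms of G that preserve c. Then for every v ∈ V, each connected component of the subgraph of G induced by the orbit {γ(v) : γ ∈ Γ_G} is a clique of G. -/
/-- A finite simple graph is trivially perfect: it has an interval representation by
pairwise distinct nonempty closed intervals that forms a laminar family. -/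
def TriviallyPerfect {V : Type*} (G : SimpleGraph V) : Prop :=
  ∃ I : V → Set ℝ,
    (∀ v, ∃ a b : ℝ, a ≤ b ∧ I v = Set.Icc a b) ∧
    (∀ v w, v ≠ w → I v ≠ I w) ∧
    (∀ v w, v ≠ w → (G.Adj v w ↔ (I v ∩ I w).Nonempty)) ∧
    (∀ v w, (I v ∩ I w).Nonempty → I v ⊆ I w ∨ I w ⊆ I v)

/-- The group of all automorphisms of `G` preserving the node weights `c`. -/
def autSet {V : Type*} (G : SimpleGraph V) (c : V → ℤ) : Set (Equiv.Perm V) :=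
  {γ | (∀ u v, G.Adj (γ u) (γ v) ↔ G.Adj u v) ∧ ∀ v, c (γ v) = c v}

/-- The orbit of a node under the full weight-preserving automorphism group. -/
def nodeOrbit {V : Type*} (G : SimpleGraph V) (c : V → ℤ) (v : V) : Set V :=
  {w | ∃ γ ∈ autSet G c, γ v = w}

/-!
In a laminar interval representation the closed neighbourhoods of two adjacent nodes are nested.
Automorphisms preserve the size of a closed neighbourhood, so, when that size is finite, adjacent
nodes of one orbit have the same closed neighbourhood. Hence the closed neighbourhood is constant
along every walk inside the orbit, and its last node lies in the closed neighbourhood of its first.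
-/

/-- The closed neighbourhood `N[v]`: the node `v` together with its neighbours. -/
def closedNeighborSet {V : Type*} (G : SimpleGraph V) (v : V) : Set V :=
  insert v (G.neighborSet v)

section ClosedNeighborSet

variable {V W : Type*} {G : SimpleGraph V} {H : SimpleGraph W} {u v : V}

lemma mem_closedNeighborSet : u ∈ closedNeighborSet G v ↔ u = v ∨ G.Adj v u :=
  Iff.rfl

lemma closedNeighborSet_iso_apply (φ : G ≃g H) (v : V) :
    closedNeighborSet H (φ v) = φ '' closedNeighborSet G v := by
  rw [closedNeighborSet, closedNeighborSet, Set.image_insert_eq, φ.image_neighborSet]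

lemma encard_closedNeighborSet_iso_apply (φ : G ≃g H) (v : V) :
    (closedNeighborSet H (φ v)).encard = (closedNeighborSet G v).encard := by
  rw [closedNeighborSet_iso_apply, φ.injective.encard_image]

lemma encard_closedNeighborSet_of_mem_nodeOrbit {c : V → ℤ} (hu : u ∈ nodeOrbit G c v) :
    (closedNeighborSet G u).encard = (closedNeighborSet G v).encard := by
  obtain ⟨γ, ⟨hγ, -⟩, rfl⟩ := hu
  exact encard_closedNeighborSet_iso_apply (⟨γ, hγ _ _⟩ : G ≃g G) v

lemma mem_closedNeighborSet_iff_inter_nonempty {α : Type*} {I : V → Set α}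
    (hI : ∀ v, (I v).Nonempty) (hadj : ∀ v w, v ≠ w → (G.Adj v w ↔ (I v ∩ I w).Nonempty)) :
    u ∈ closedNeighborSet G v ↔ (I v ∩ I u).Nonempty := by
  rcases eq_or_ne v u with rfl | hvu
  · simp only [mem_closedNeighborSet, true_or, Set.inter_self, hI]
  · rw [mem_closedNeighborSet, or_iff_right hvu.symm, hadj v u hvu]

end ClosedNeighborSet

namespace TriviallyPerfect

variable {V : Type*} {G : SimpleGraph V} {u v : V}

lemma closedNeighborSet_subset_or_subset (hG : TriviallyPerfect G) (huv : G.Adj u v) :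
    closedNeighborSet G u ⊆ closedNeighborSet G v ∨
      closedNeighborSet G v ⊆ closedNeighborSet G u := by
  obtain ⟨I, hIcc, -, hadj, hlaminar⟩ := hG
  have hI (x : V) : (I x).Nonempty := by
    obtain ⟨a, b, hab, hx⟩ := hIcc x
    exact hx ▸ Set.nonempty_Icc.2 hab
  have hmono {x y : V} (hxy : I x ⊆ I y) : closedNeighborSet G x ⊆ closedNeighborSet G y := by
    intro z hz
    rw [mem_closedNeighborSet_iff_inter_nonempty hI hadj] at hz ⊢
    exact hz.mono (Set.inter_subset_inter_left _ hxy)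
  exact (hlaminar u v ((hadj u v huv.ne).1 huv)).imp hmono hmono

lemma closedNeighborSet_eq_of_adj (hG : TriviallyPerfect G) (huv : G.Adj u v)
    (hfin : (closedNeighborSet G u).Finite)
    (hcard : (closedNeighborSet G u).encard = (closedNeighborSet G v).encard) :
    closedNeighborSet G u = closedNeighborSet G v := by
  rcases hG.closedNeighborSet_subset_or_subset huv with hsub | hsub
  · exact hfin.eq_of_subset_of_encard_le hsub hcard.ge
  · exact (hfin.eq_of_subset_of_encard_le' hsub hcard.le).symm

lemma closedNeighborSet_eq_of_reachable_induce (hG : TriviallyPerfect G) {s : Set V}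
    (hfin : ∀ x ∈ s, (closedNeighborSet G x).Finite)
    (hcard : ∀ x ∈ s, ∀ y ∈ s, (closedNeighborSet G x).encard = (closedNeighborSet G y).encard)
    {x y : s} (hxy : (G.induce s).Reachable x y) :
    closedNeighborSet G x = closedNeighborSet G y := by
  obtain ⟨walk⟩ := hxy
  induction walk with
  | nil => rfl
  | @cons x z y hxz _ ih =>
    exact (hG.closedNeighborSet_eq_of_adj hxz (hfin x x.2) (hcard x x.2 z z.2)).trans ih

end TriviallyPerfect

theorem orbit_component_is_clique_general
    {V : Type*} (G : SimpleGraph V)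
    (hTP : TriviallyPerfect G) (c : V → ℤ) (v : V) (hv : (G.neighborSet v).Finite) :
    ∀ (u : V) (hu : u ∈ nodeOrbit G c v) (w : V) (hw : w ∈ nodeOrbit G c v),
      (G.induce (nodeOrbit G c v)).Reachable ⟨u, hu⟩ ⟨w, hw⟩ → u ≠ w → G.Adj u w := by
  intro u hu w hw huw hne
  have hcard : ∀ x ∈ nodeOrbit G c v,
      (closedNeighborSet G x).encard = (closedNeighborSet G v).encard :=
    fun _ hx ↦ encard_closedNeighborSet_of_mem_nodeOrbit hx
  have hfin : ∀ x ∈ nodeOrbit G c v, (closedNeighborSet G x).Finite :=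
    fun x hx ↦ Set.encard_lt_top_iff.1 (hcard x hx ▸ (hv.insert v).encard_lt_top)
  have hNuw : closedNeighborSet G u = closedNeighborSet G w :=
    hTP.closedNeighborSet_eq_of_reachable_induce hfin
      (fun x hx y hy ↦ (hcard x hx).trans (hcard y hy).symm) huw
  have hwu : w ∈ closedNeighborSet G u := hNuw ▸ Set.mem_insert w _
  exact (mem_closedNeighborSet.1 hwu).resolve_left hne.symm

/-- In a trivially perfect graph, each connected component of the subgraph induced by a
node orbit of the weight-preserving automorphism group is a clique: any two distinct
orbit members that are reachable within the induced subgraph are adjacent. -/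
theorem orbit_component_is_clique
    {V : Type*} [Fintype V] [DecidableEq V] (G : SimpleGraph V)
    (hTP : TriviallyPerfect G) (c : V → ℤ) (v : V) :
    ∀ (u : V) (hu : u ∈ nodeOrbit G c v) (w : V) (hw : w ∈ nodeOrbit G c v),
      (G.induce (nodeOrbit G c v)).Reachable ⟨u, hu⟩ ⟨w, hw⟩ → u ≠ w → G.Adj u w :=
  orbit_component_is_clique_general G hTP c v (Set.toFinite _)
end
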